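/- Fix a prime number p. Let k > 0 be an integer and let n_1, ..., n_{k-1} be positive integers. Choose an integer r > 0 such that p^r > n_1 + ... + n_{k-1}, and set n_k = p^r - (n_1 + ... + n_{k-1}). Then there exists a finite p-group G with irreducible complex characters Ψ, Θ ∈ Irr(G) such that ΨΘ = Σ_{i=1}^{k} n_i Φ_i, where Φ_1, ..., Φ_k are pairwise distinct irreducible characters of G and n_i = (ΨΘ, Φ_i) is the multiplicity of Φ_i in ΨΘ for each i. In particular, the product ΨΘ has exactly k distinct irreducible constituents. -/

import Mathlib

/-- `χ : G → ℂ` is a (complex) character of `G`: the trace function of some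
finite-dimensional complex representation of `G`. -/
def IsChar (G : Type*) [Group G] (χ : G → ℂ) : Prop :=
  ∃ (n : ℕ) (ρ : Representation ℂ G (Fin n → ℂ)),
    ∀ g : G, χ g = LinearMap.trace ℂ (Fin n → ℂ) (ρ g)

/-- The usual inner product of class functions on a finite group. -/
noncomputable def cInner (G : Type*) [Group G] [Finite G] (χ φ : G → ℂ) : ℂ :=
  (Nat.card G : ℂ)⁻¹ * ∑ᶠ g : G, χ g * (starRingEnd ℂ) (φ g)

/-- `χ` is an irreducible character of the finite group `G`. -/
def IsIrrChar (G : Type*) [Group G] [Finite G] (χ : G → ℂ) : Prop :=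
  IsChar G χ ∧ cInner G χ χ = 1

open scoped Classical in
/-- The induced character `χ^G` of a character `χ` of a subgroup `H ≤ G`. -/
noncomputable def inducedChar {G : Type*} [Group G] [Finite G]
    (H : Subgroup G) (χ : ↥H → ℂ) : G → ℂ :=
  fun g => (Nat.card H : ℂ)⁻¹ *
    ∑ᶠ x : G, if h : x⁻¹ * g * x ∈ H then χ ⟨x⁻¹ * g * x, h⟩ else 0

/-!
Let `P` be a finite abelian group of order `q = ∑ i, m i` (here cyclic), and let `G = E ≀ P`.
Characters of `G` are induced from external products `⨂ y, χ y` of characters of `E` over the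
coordinates of the base group. Such an induced character is irreducible when the `χ y` are
irreducible and only the identity of `P` preserves the family `χ`. By the projection formula,
`Ind (⨂ y, χ y) * Ind (⨂ y, χ' y) = ∑ x : P, Ind (⨂ y, χ (x • y) * χ' y)`.

Choose an irreducible character `ω` of `E` with `a * ω = ω` for every linear character `a` of `P`
inflated to `E`; for `E = P ≀ P`, any character induced from the base group absorbs them. If `Ψ`
comes from a family of linear characters `c x` and `Θ` from the family that is trivial at the
identity of `P` and `ω` elsewhere, then the `x`-th summand of `Ψ * Θ` is the character `Φ (c x)`
with `c x` at the identity and `ω` elsewhere. So the multiplicities are the sizes of the fibres of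
`c : P → (P →* ℂˣ)`, and these can be prescribed because the dual of `P` also has order `q`. A
second copy of the coordinates makes the family defining `Ψ` have trivial stabilizer.
-/

open Function

section IsChar

variable {G H : Type*} [Group G] [Group H]

lemma isChar_character {V : Type*} [AddCommGroup V] [Module ℂ V] [FiniteDimensional ℂ V]
    (ρ : Representation ℂ G V) : IsChar G ρ.character := by
  let e := (Module.finBasis ℂ V).equivFun
  let σ : Representation ℂ G (Fin (Module.finrank ℂ V) → ℂ) :=
    (LinearEquiv.conjRingEquiv e : _ →* _).comp ρ
  exact ⟨_, σ, fun g => (LinearMap.trace_conj' (ρ g) e).symm⟩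

lemma isChar_trace {ι : Type*} [Fintype ι] [DecidableEq ι] (M : G →* Matrix ι ι ℂ) :
    IsChar G fun g => (M g).trace := by
  let ρ : Representation ℂ G (ι → ℂ) := (Matrix.toLinAlgEquiv'.toMulEquiv.toMonoidHom).comp M
  convert! isChar_character ρ using 2 with g
  exact (Matrix.trace_toLin'_eq (M g)).symm

lemma isChar_coe (f : G →* ℂˣ) : IsChar G fun g => (f g : ℂ) := by
  convert! isChar_trace (ι := Unit)
    ((Matrix.scalar Unit).toMonoidHom.comp ((Units.coeHom ℂ).comp f)) using 2 with g
  simp [Matrix.trace]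

namespace IsChar

variable {χ ψ : G → ℂ}

lemma exists_trace (hχ : IsChar G χ) :
    ∃ (n : ℕ) (M : G →* Matrix (Fin n) (Fin n) ℂ), ∀ g, χ g = (M g).trace := by
  obtain ⟨n, ρ, hρ⟩ := hχ
  refine ⟨n, LinearMap.toMatrixAlgEquiv'.toMulEquiv.toMonoidHom.comp ρ, fun g => ?_⟩
  rw [hρ g, LinearMap.trace_eq_matrix_trace ℂ (Pi.basisFun ℂ (Fin n))]
  rfl

lemma comp (hχ : IsChar G χ) (f : H →* G) : IsChar H (χ ∘ f) := by
  obtain ⟨n, ρ, hρ⟩ := hχ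
  exact ⟨n, ρ.comp f, fun h => hρ (f h)⟩

lemma mul (hχ : IsChar G χ) (hψ : IsChar G ψ) : IsChar G (χ * ψ) := by
  obtain ⟨n, ρ, hρ⟩ := hχ
  obtain ⟨k, σ, hσ⟩ := hψ
  obtain rfl : χ = ρ.character := funext hρ
  obtain rfl : ψ = σ.character := funext hσ
  rw [← Representation.char_tensor]
  exact isChar_character _

lemma prod {ι : Type*} (s : Finset ι) {χ : ι → G → ℂ} (hχ : ∀ i, IsChar G (χ i)) :
    IsChar G (∏ i ∈ s, χ i) :=
  s.prod_induction _ _ (fun _ _ => mul) (by simpa using! isChar_coe (1 : G →* ℂˣ))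
    fun i _ => hχ i

lemma pi {Y : Type*} [Fintype Y] {χ : Y → G → ℂ} (hχ : ∀ y, IsChar G (χ y)) :
    IsChar (Y → G) fun b => ∏ y, χ y (b y) := by
  have hy (y : Y) := (hχ y).comp (Pi.evalMonoidHom (fun _ => G) y)
  simpa [Finset.prod_fn] using prod Finset.univ hy

end IsChar

end IsChar

section InnerProduct

variable {G : Type*} [Group G]

lemma cInner_eq_sum [Fintype G] (χ φ : G → ℂ) :
    cInner G χ φ = (Fintype.card G : ℂ)⁻¹ * ∑ g, χ g * starRingEnd ℂ (φ g) := by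
  rw [cInner, finsum_eq_sum_of_fintype, Nat.card_eq_fintype_card]

variable [Finite G]

lemma conj_cInner (χ φ : G → ℂ) : starRingEnd ℂ (cInner G χ φ) = cInner G φ χ := by
  have := Fintype.ofFinite G
  simp [cInner_eq_sum, mul_comm]

lemma cInner_sum_mul_left {ι : Type*} (s : Finset ι) (c : ι → ℂ) (χ : ι → G → ℂ) (φ : G → ℂ) :
    cInner G (fun g => ∑ i ∈ s, c i * χ i g) φ = ∑ i ∈ s, c i * cInner G (χ i) φ := by
  have := Fintype.ofFinite G
  simp only [cInner_eq_sum, Finset.sum_mul, Finset.mul_sum]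
  rw [Finset.sum_comm]
  exact Finset.sum_congr rfl fun i _ => Finset.sum_congr rfl fun g _ => by ring

lemma cInner_sum_left {ι : Type*} (s : Finset ι) (χ : ι → G → ℂ) (φ : G → ℂ) :
    cInner G (fun g => ∑ i ∈ s, χ i g) φ = ∑ i ∈ s, cInner G (χ i) φ := by
  simpa using cInner_sum_mul_left s 1 χ φ

lemma cInner_pi {Y : Type*} [Fintype Y] (χ φ : Y → G → ℂ) :
    cInner (Y → G) (fun b => ∏ y, χ y (b y)) (fun b => ∏ y, φ y (b y)) =
      ∏ y, cInner G (χ y) (φ y) := by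
  classical
  have := Fintype.ofFinite G
  simp only [cInner_eq_sum, map_prod, ← Finset.prod_mul_distrib]
  rw [Finset.prod_mul_distrib, Finset.prod_univ_sum, Fintype.piFinset_univ]
  simp

lemma cInner_coe [DecidableEq (G →* ℂˣ)] (f f' : G →* ℂˣ) :
    cInner G (fun g => (f g : ℂ)) (fun g => (f' g : ℂ)) = if f = f' then 1 else 0 := by
  classical
  have := Fintype.ofFinite G
  have hterm (g : G) : (f g : ℂ) * starRingEnd ℂ (f' g) = (Units.coeHom ℂ).comp (f / f') g := by
    have hnorm : ‖(f' g : ℂ)‖ = 1 :=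
      (((Units.coeHom ℂ).comp f').isOfFinOrder (isOfFinOrder_of_finite g)).norm_eq_one
    simp [← Complex.inv_eq_conj hnorm, div_eq_mul_inv]
  have hone : (Units.coeHom ℂ).comp (f / f') = 1 ↔ f = f' := by
    rw [← div_eq_one (a := f), ← MonoidHom.cancel_left (g := Units.coeHom ℂ) Units.val_injective,
      MonoidHom.comp_one]
  simp only [cInner_eq_sum, hterm, sum_hom_units, hone]
  split_ifs <;> simp

lemma injective_of_cInner_eq_ite {ι : Type*} [DecidableEq ι] {X : ι → G → ℂ}
    (hX : ∀ i j, cInner G (X i) (X j) = if i = j then 1 else 0) : Injective X := by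
  intro i j hij
  have h := hX i j
  rw [hij, hX j j] at h
  by_contra hne
  simp [hne] at h

end InnerProduct

section SemidirectProduct

variable {B P : Type*} [Group B] [Group P] {φ : P →* MulAut B}

instance finite_semidirectProduct [Finite B] [Finite P] : Finite (B ⋊[φ] P) :=
  .of_equiv _ SemidirectProduct.equivProd.symm

variable [Fintype P]

open scoped Classical in
/-- The character of `B ⋊[φ] P` induced from a character `f` of the normal subgroup `B`. Since `P`
is a transversal of `B`, the sum over the whole group in `inducedChar` collapses to one over `P`. -/
noncomputable def semidirectInd (φ : P →* MulAut B) (f : B → ℂ) (g : B ⋊[φ] P) : ℂ :=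
  if g.right = 1 then ∑ x, f (φ x g.left) else 0

lemma semidirectInd_inl (f : B → ℂ) (b : B) :
    semidirectInd φ f (.inl b) = ∑ x, f (φ x b) := by
  simp [semidirectInd]

lemma semidirectInd_of_right_ne_one (f : B → ℂ) {g : B ⋊[φ] P} (hg : g.right ≠ 1) :
    semidirectInd φ f g = 0 :=
  if_neg hg

open scoped Classical in
/-- The block monomial matrix representation of `B ⋊[φ] P` induced from the matrix representation
`M` of `B`; the blocks are indexed by `P`. -/
noncomputable def semidirectIndMatrix {n : ℕ} (M : B →* Matrix (Fin n) (Fin n) ℂ) :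
    B ⋊[φ] P →* Matrix (P × Fin n) (P × Fin n) ℂ where
  toFun g := .of fun u v => if u.1 * g.right = v.1 then M (φ u.1 g.left) u.2 v.2 else 0
  map_one' := by
    ext u v
    simp [Matrix.one_apply, Prod.ext_iff, ite_and]
  map_mul' g h := by
    ext u v
    simp only [Matrix.of_apply, Matrix.mul_apply, Fintype.sum_prod_type]
    rw [Finset.sum_eq_single (u.1 * g.right) (fun x _ hx => by simp [hx.symm]) (by simp)]
    simp [mul_assoc, Matrix.mul_apply]

lemma isChar_semidirectInd {f : B → ℂ} (hf : IsChar B f) :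
    IsChar (B ⋊[φ] P) (semidirectInd φ f) := by
  classical
  obtain ⟨n, M, hM⟩ := hf.exists_trace
  convert! isChar_trace (semidirectIndMatrix (φ := φ) M) using 2 with g
  by_cases hg : g.right = 1 <;>
    simp [semidirectInd, semidirectIndMatrix, Matrix.trace, Fintype.sum_prod_type, hM, hg]

lemma mul_semidirectInd {ψ : B ⋊[φ] P → ℂ} (hψ : ∀ x b, ψ (.inl (φ x b)) = ψ (.inl b))
    (f : B → ℂ) (g : B ⋊[φ] P) :
    ψ g * semidirectInd φ f g = semidirectInd φ (fun b => ψ (.inl b) * f b) g := by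
  by_cases hg : g.right = 1
  · have hinl : g = .inl g.left := SemidirectProduct.ext rfl hg
    rw [hinl]
    simp [semidirectInd_inl, hψ, Finset.mul_sum]
  · simp [semidirectInd_of_right_ne_one _ hg]

lemma semidirectInd_inl_aut (f : B → ℂ) (x : P) (b : B) :
    semidirectInd φ f (.inl (φ x b)) = semidirectInd φ f (.inl b) := by
  simp only [semidirectInd_inl, ← MulAut.mul_apply, ← map_mul]
  exact Equiv.sum_comp (Equiv.mulRight x) fun y => f (φ y b)

lemma semidirectInd_mul_semidirectInd (f f' : B → ℂ) (g : B ⋊[φ] P) :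
    semidirectInd φ f g * semidirectInd φ f' g =
      ∑ x, semidirectInd φ (fun b => f (φ x b) * f' b) g := by
  rw [mul_semidirectInd (semidirectInd_inl_aut f)]
  simp only [semidirectInd_inl, Finset.sum_mul]
  by_cases hg : g.right = 1
  · simp only [semidirectInd, if_pos hg]
    exact Finset.sum_comm
  · simp [semidirectInd_of_right_ne_one _ hg]

lemma sum_semidirectInd [Fintype B] [Fintype (B ⋊[φ] P)] (f : B → ℂ) :
    ∑ g, semidirectInd φ f g = Fintype.card P * ∑ b, f b := by
  have hone (b : B) : ∑ x, semidirectInd φ f ⟨b, x⟩ = semidirectInd φ f (.inl b) :=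
    Finset.sum_eq_single 1 (fun x _ hx => semidirectInd_of_right_ne_one f hx) (by simp)
  calc ∑ g, semidirectInd φ f g = ∑ b, ∑ x, semidirectInd φ f ⟨b, x⟩ := by
        rw [← SemidirectProduct.equivProd.symm.sum_comp, Fintype.sum_prod_type]; rfl
    _ = ∑ x, ∑ b, f (φ x b) := by
        simp only [hone, semidirectInd_inl]
        exact Finset.sum_comm
    _ = ∑ _x : P, ∑ b, f b := Finset.sum_congr rfl fun x _ => (φ x).toEquiv.sum_comp f
    _ = Fintype.card P * ∑ b, f b := by simp

lemma cInner_semidirectInd_right [Finite B] {ψ : B ⋊[φ] P → ℂ}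
    (hψ : ∀ x b, ψ (.inl (φ x b)) = ψ (.inl b)) (f : B → ℂ) :
    cInner (B ⋊[φ] P) ψ (semidirectInd φ f) = cInner B (fun b => ψ (.inl b)) f := by
  have := Fintype.ofFinite B
  have := Fintype.ofFinite (B ⋊[φ] P)
  have hconj (g : B ⋊[φ] P) : starRingEnd ℂ (semidirectInd φ f g) =
      semidirectInd φ (fun b => starRingEnd ℂ (f b)) g := by
    simp only [semidirectInd, apply_ite (starRingEnd ℂ), map_sum, map_zero]
  have hcard : (Fintype.card (B ⋊[φ] P) : ℂ) = Fintype.card B * Fintype.card P := by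
    simp only [Fintype.card_eq_nat_card, SemidirectProduct.card, Nat.cast_mul]
  simp only [cInner_eq_sum, hconj, mul_semidirectInd hψ, sum_semidirectInd, hcard]
  field_simp

lemma cInner_semidirectInd_semidirectInd [Finite B] (f f' : B → ℂ) :
    cInner (B ⋊[φ] P) (semidirectInd φ f) (semidirectInd φ f') =
      ∑ x, cInner B (fun b => f (φ x b)) f' := by
  rw [cInner_semidirectInd_right (semidirectInd_inl_aut f)]
  simp only [semidirectInd_inl, cInner_sum_left]

end SemidirectProduct

section PermWreath

/-- The permutational wreath product of `E` by the group `P` acting on `Y`. -/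
abbrev PermWreath (P Y E : Type*) [Group P] [MulAction P Y] [Group E] : Type _ :=
  (Y → E) ⋊[(mulAutArrow : P →* MulAut (Y → E))] P

variable {P Y E : Type*} [Group P] [MulAction P Y] [Group E]

lemma card_permWreath [Finite Y] :
    Nat.card (PermWreath P Y E) = Nat.card E ^ Nat.card Y * Nat.card P := by
  rw [SemidirectProduct.card, Nat.card_fun]

variable [Fintype Y]

lemma prod_mulAutArrow (χ : Y → E → ℂ) (x : P) (b : Y → E) :
    ∏ y, χ y (mulAutArrow x b y) = ∏ y, χ (x • y) (b y) := by
  have hact (y : Y) : mulAutArrow x b (x • y) = b y := congrArg b (inv_smul_smul x y)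
  rw [← Equiv.prod_comp (MulAction.toPerm x)]
  simp only [MulAction.toPerm_apply, hact]

variable [Fintype P]

/-- The character of the wreath product induced from the character `⨂ y, χ y` of its base group. -/
noncomputable def wreathChar (χ : Y → E → ℂ) : PermWreath P Y E → ℂ :=
  semidirectInd mulAutArrow fun b : Y → E => ∏ y, χ y (b y)

lemma isChar_wreathChar {χ : Y → E → ℂ} (hχ : ∀ y, IsChar E (χ y)) :
    IsChar (PermWreath P Y E) (wreathChar χ) :=
  isChar_semidirectInd (.pi hχ)

lemma wreathChar_mul_wreathChar (χ χ' : Y → E → ℂ) (g : PermWreath P Y E) :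
    wreathChar χ g * wreathChar χ' g =
      ∑ x : P, wreathChar (fun y e => χ (x • y) e * χ' y e) g := by
  simp only [wreathChar, semidirectInd_mul_semidirectInd, prod_mulAutArrow,
    Finset.prod_mul_distrib]

variable [Finite E]

lemma cInner_wreathChar_wreathChar (χ χ' : Y → E → ℂ) :
    cInner (PermWreath P Y E) (wreathChar χ) (wreathChar χ') =
      ∑ x : P, ∏ y, cInner E (χ (x • y)) (χ' y) := by
  simp only [wreathChar, cInner_semidirectInd_semidirectInd, prod_mulAutArrow, cInner_pi]

lemma cInner_wreathChar_comp {ι : Type*} [DecidableEq ι] {X : ι → E → ℂ}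
    (hX : ∀ i j, cInner E (X i) (X j) = if i = j then 1 else 0) {l l' : Y → ι}
    (hl : ∀ x : P, (∀ y, l (x • y) = l' y) → x = 1) [Decidable (l = l')] :
    cInner (PermWreath P Y E) (wreathChar fun y => X (l y)) (wreathChar fun y => X (l' y)) =
      if l = l' then 1 else 0 := by
  have hprod (x : P) : ∏ y, cInner E (X (l (x • y))) (X (l' y)) =
      if ∀ y, l (x • y) = l' y then 1 else 0 := by
    simp only [hX, Finset.prod_boole, Finset.mem_univ, true_imp_iff]
  rw [cInner_wreathChar_wreathChar, Finset.sum_eq_single 1]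
  · rw [hprod]
    simp [funext_iff]
  · intro x _ hx
    rw [hprod, if_neg fun h => hx (hl x h)]
  · simp

end PermWreath

section LabelledChar

open scoped Classical in
/-- The family of linear characters of `P`, indexed by `P`, that is `χ` at the identity and trivial
elsewhere. It tells the identity apart, so the base group character `⨂ y, marking χ y` has trivial
stabilizer in `P`. -/
noncomputable def marking {P : Type*} [Group P] (χ : P →* ℂˣ) (y : P) : P →* ℂˣ :=
  if y = 1 then χ else 1

/-- The irreducible characters of `P ≀ P` used as local factors: `some a` is the linear character
inflated from `a`, and `none` is the character induced from `χ` at a single coordinate of the base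
group, which absorbs every `some a`. -/
noncomputable def localChar {P : Type*} [Group P] [Fintype P] (χ : P →* ℂˣ) :
    Option (P →* ℂˣ) → PermWreath P P P → ℂ
  | none => wreathChar fun y e => (marking χ y e : ℂ)
  | some a => fun g => (a.comp SemidirectProduct.rightHom g : ℂˣ)

variable {P : Type*} [Group P]

lemma marking_one (χ : P →* ℂˣ) : marking χ 1 = χ :=
  if_pos rfl

lemma eq_one_of_marking_eq {χ : P →* ℂˣ} (hχ : χ ≠ 1) {x : P} (hx : marking χ x = χ) : x = 1 := by
  by_contra hne
  exact hχ (by simpa [marking, hne] using hx.symm)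

/-- The wreath product of `P ≀ P` by two copies of the regular action of `P`. On the first copy the
factors of the two characters produce the constituents of their product; the second copy only
serves to make the linear one irreducible. -/
abbrev DoubledWreath (P : Type*) [Group P] : Type _ := PermWreath P (P ⊕ P) (PermWreath P P P)

lemma card_doubledWreath [Finite P] :
    Nat.card (DoubledWreath P) =
      Nat.card P ^ ((Nat.card P + 1) * (2 * Nat.card P) + 1) := by
  rw [card_permWreath, card_permWreath, Nat.card_sum]
  ring

variable [Fintype P]

lemma isChar_localChar (χ : P →* ℂˣ) (i : Option (P →* ℂˣ)) :
    IsChar (PermWreath P P P) (localChar χ i) := by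
  cases i with
  | none => exact isChar_wreathChar fun _ => isChar_coe _
  | some a => exact isChar_coe _

lemma localChar_some_mul_none (χ a : P →* ℂˣ) (g : PermWreath P P P) :
    localChar χ (some a) g * localChar χ none g = localChar χ none g := by
  simp only [localChar, wreathChar]
  rw [mul_semidirectInd (ψ := fun g => (a.comp SemidirectProduct.rightHom g : ℂˣ)) (by simp)]
  simp

lemma localChar_some_mul_some (χ a b : P →* ℂˣ) (g : PermWreath P P P) :
    localChar χ (some a) g * localChar χ (some b) g = localChar χ (some (a * b)) g := by
  simp [localChar]

variable {χ : P →* ℂˣ}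

lemma cInner_localChar_none_none (hχ : χ ≠ 1) :
    cInner (PermWreath P P P) (localChar χ none) (localChar χ none) = 1 := by
  classical
  have h := cInner_wreathChar_comp (P := P) (X := fun (a : P →* ℂˣ) g => (a g : ℂ)) cInner_coe
    (l := marking χ) (l' := marking χ)
    fun x hx => eq_one_of_marking_eq hχ (by simpa [marking_one] using hx 1)
  simpa [localChar] using h

lemma cInner_localChar_some_none (hχ : χ ≠ 1) (a : P →* ℂˣ) :
    cInner (PermWreath P P P) (localChar χ (some a)) (localChar χ none) = 0 := by
  classical
  have hres (b : P → P) : ((a.comp SemidirectProduct.rightHom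
      (.inl b : PermWreath P P P) : ℂˣ) : ℂ) = ∏ y, ((1 : P →* ℂˣ) (b y) : ℂ) := by simp
  simp only [localChar, wreathChar]
  rw [cInner_semidirectInd_right (by simp)]
  simp only [hres]
  rw [cInner_pi (fun _ e => ((1 : P →* ℂˣ) e : ℂ))
    (fun y e => (marking χ y e : ℂ))]
  exact Finset.prod_eq_zero (Finset.mem_univ 1)
    (by rw [marking_one, cInner_coe, if_neg hχ.symm])

lemma cInner_localChar [DecidableEq (P →* ℂˣ)] (hχ : χ ≠ 1) (i j : Option (P →* ℂˣ)) :
    cInner (PermWreath P P P) (localChar χ i) (localChar χ j) = if i = j then 1 else 0 := by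
  classical
  rcases i with _ | a <;> rcases j with _ | b
  · simpa using cInner_localChar_none_none hχ
  · simpa [cInner_localChar_some_none hχ b] using
      (conj_cInner (localChar χ (some b)) (localChar χ none)).symm
  · simpa using cInner_localChar_some_none hχ a
  · rw [localChar, localChar, cInner_coe]
    simp only [MonoidHom.cancel_right SemidirectProduct.rightHom_surjective, Option.some_inj]

/-- The character of `DoubledWreath P` with local factors prescribed by `l`. -/
noncomputable def labelledChar (χ : P →* ℂˣ) (l : P ⊕ P → Option (P →* ℂˣ)) :
    DoubledWreath P → ℂ :=
  wreathChar fun y => localChar χ (l y)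

open scoped Classical in
/-- The labels of the constituents: linear at one coordinate, absorbing at all the others. -/
noncomputable def pointLabel (a : P →* ℂˣ) (y : P ⊕ P) : Option (P →* ℂˣ) :=
  if y = .inl 1 then some a else none

/-- The labels of a product of linear characters, prescribed by `c` on the first copy of `P`. On the
second copy `χ` marks a single coordinate, so that only the identity of `P` preserves the labels. -/
noncomputable def linearLabel (χ : P →* ℂˣ) (c : P → P →* ℂˣ) : P ⊕ P → P →* ℂˣ :=
  Sum.elim c (marking χ)

lemma isChar_labelledChar (l : P ⊕ P → Option (P →* ℂˣ)) :
    IsChar (DoubledWreath P) (labelledChar χ l) :=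
  isChar_wreathChar fun _ => isChar_localChar _ _

lemma labelledChar_linearLabel_mul_pointLabel (c : P → P →* ℂˣ) (g : DoubledWreath P) :
    labelledChar χ (some ∘ linearLabel χ c) g * labelledChar χ (pointLabel 1) g =
      ∑ x, labelledChar χ (pointLabel (c x)) g := by
  simp only [labelledChar, wreathChar_mul_wreathChar]
  refine Finset.sum_congr rfl fun x _ => congrArg (wreathChar · g) (funext₂ fun y e => ?_)
  by_cases hy : y = .inl 1
  · simp [pointLabel, linearLabel, hy, localChar_some_mul_some, mul_one (c x)]
  · simp [pointLabel, hy, localChar_some_mul_none]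

lemma cInner_labelledChar_pointLabel [DecidableEq (P →* ℂˣ)] (hχ : χ ≠ 1) (a b : P →* ℂˣ) :
    cInner (DoubledWreath P) (labelledChar χ (pointLabel a)) (labelledChar χ (pointLabel b)) =
      if a = b then 1 else 0 := by
  classical
  have hinj : pointLabel a = pointLabel b ↔ a = b :=
    ⟨fun h => by simpa [pointLabel] using congrFun h (.inl 1), congrArg _⟩
  rw [labelledChar, labelledChar, cInner_wreathChar_comp (cInner_localChar hχ)]
  · simp only [hinj]
  · intro x hx
    by_contra hne
    simpa [pointLabel, hne] using hx (.inl 1)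

lemma cInner_labelledChar_linearLabel_self (hχ : χ ≠ 1) (c : P → P →* ℂˣ) :
    cInner (DoubledWreath P) (labelledChar χ (some ∘ linearLabel χ c))
      (labelledChar χ (some ∘ linearLabel χ c)) = 1 := by
  classical
  rw [labelledChar, cInner_wreathChar_comp (cInner_localChar hχ), if_pos rfl]
  intro x hx
  exact eq_one_of_marking_eq hχ (by simpa [linearLabel, marking_one] using hx (.inr 1))

end LabelledChar

lemma exists_mul_eq_sum_doubledWreath {P ι : Type*} [Group P] [Finite P] [Fintype ι]
    {χ : P →* ℂˣ} (hχ : χ ≠ 1) (a : ι ↪ (P →* ℂˣ)) (m : ι → ℕ) (hm : ∑ i, m i = Nat.card P) :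
    ∃ (Ψ Θ : DoubledWreath P → ℂ) (Φ : ι → (DoubledWreath P → ℂ)),
      IsIrrChar _ Ψ ∧ IsIrrChar _ Θ ∧ (∀ i, IsIrrChar _ (Φ i)) ∧ Injective Φ ∧
      (∀ g, Ψ g * Θ g = ∑ i, (m i : ℂ) * Φ i g) ∧
      (∀ i, cInner _ (fun g => Ψ g * Θ g) (Φ i) = (m i : ℂ)) := by
  classical
  have := Fintype.ofFinite P
  let e : P ≃ Σ i, Fin (m i) :=
    Fintype.equivOfCardEq (by rw [Fintype.card_eq_nat_card, ← hm]; simp)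
  let Ψ := labelledChar χ (some ∘ linearLabel χ fun x => a (e x).1)
  let Θ := labelledChar χ (pointLabel 1)
  let Φ (i : ι) := labelledChar χ (pointLabel (a i))
  have horth (i j : ι) : cInner _ (Φ i) (Φ j) = if i = j then 1 else 0 := by
    simp [Φ, cInner_labelledChar_pointLabel hχ]
  have hprod (g : DoubledWreath P) : Ψ g * Θ g = ∑ i, (m i : ℂ) * Φ i g := by
    simp only [Ψ, Θ, labelledChar_linearLabel_mul_pointLabel]
    rw [e.sum_comp fun s => Φ s.1 g, Fintype.sum_sigma]
    simp
  refine ⟨Ψ, Θ, Φ, ⟨isChar_labelledChar _, cInner_labelledChar_linearLabel_self hχ _⟩,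
    ⟨isChar_labelledChar _, by simp [Θ, cInner_labelledChar_pointLabel hχ]⟩,
    fun i => ⟨isChar_labelledChar _, by simp [horth]⟩, injective_of_cInner_eq_ite horth, hprod,
    fun i => ?_⟩
  simp only [hprod, cInner_sum_mul_left, horth]
  simp

theorem product_with_prescribed_constituents_general {ι : Type*} [Fintype ι] (m : ι → ℕ)
    (hm : ∀ i, 0 < m i) (hsum : 1 < ∑ i, m i) :
    ∃ (G : Type) (_ : Group G) (_ : Finite G), (∃ N, Nat.card G = (∑ i, m i) ^ N) ∧
      ∃ (Ψ Θ : G → ℂ) (Φ : ι → (G → ℂ)),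
        IsIrrChar G Ψ ∧ IsIrrChar G Θ ∧
        (∀ i, IsIrrChar G (Φ i)) ∧ Function.Injective Φ ∧
        (∀ g : G, Ψ g * Θ g = ∑ i, (m i : ℂ) * Φ i g) ∧
        (∀ i, cInner G (fun g => Ψ g * Θ g) (Φ i) = (m i : ℂ)) := by
  have : NeZero (∑ i, m i) := ⟨by lia⟩
  have : Fact (1 < ∑ i, m i) := ⟨hsum⟩
  let P := Multiplicative (ZMod (∑ i, m i))
  have hP : Nat.card P = ∑ i, m i := Nat.card_zmod _
  have hdual : Nat.card (P →* ℂˣ) = ∑ i, m i :=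
    (CommGroup.card_monoidHom_of_hasEnoughRootsOfUnity P ℂ).trans hP
  have : Finite (P →* ℂˣ) := Nat.finite_of_card_ne_zero (by lia)
  have := Fintype.ofFinite (P →* ℂˣ)
  have : Nontrivial (P →* ℂˣ) := Finite.one_lt_card_iff_nontrivial.mp (by lia)
  obtain ⟨χ, hχ⟩ := exists_ne (1 : P →* ℂˣ)
  have hcard : Fintype.card ι ≤ Fintype.card (P →* ℂˣ) := by
    rw [Fintype.card_eq_nat_card (α := P →* ℂˣ), hdual, Fintype.card_eq_sum_ones]
    exact Finset.sum_le_sum fun i _ => hm i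
  obtain ⟨a⟩ := Embedding.nonempty_of_card_le hcard
  exact ⟨DoubledWreath P, inferInstance, inferInstance, ⟨_, hP ▸ card_doubledWreath⟩,
    exists_mul_eq_sum_doubledWreath hχ a m hP.symm⟩

/-- **Theorem A.** Fix a prime `p`. Let `k > 0` and let `n 0, …, n (k-2)` (the
multiplicities `n_1, …, n_{k-1}`) be positive integers.  Choose `r > 0` with
`p ^ r > n_1 + ⋯ + n_{k-1}` and let `m : Fin k → ℕ` be the full list of
multiplicities, i.e. `m i = n i` for `i < k - 1` and the last one is
`n_k = p ^ r - (n_1 + ⋯ + n_{k-1})`.  Then there is a finite `p`-group `G`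
with irreducible characters `Ψ, Θ` such that `Ψ Θ = ∑ i, m i • Φ i` for
pairwise distinct irreducible characters `Φ i` of `G`, with
`m i = (Ψ Θ, Φ i)`; in particular `Ψ Θ` has exactly `k` distinct irreducible
constituents. -/
theorem product_with_prescribed_constituents
    (p : ℕ) (hp : p.Prime) (k : ℕ) (hk : 0 < k)
    (n : Fin (k - 1) → ℕ) (hn : ∀ i, 0 < n i)
    (r : ℕ) (hr : 0 < r) (hlt : ∑ i, n i < p ^ r)
    (m : Fin k → ℕ)
    (hm : ∀ (i : Fin k) (h : (i : ℕ) < k - 1), m i = n ⟨i, h⟩)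
    (hmk : m ⟨k - 1, Nat.sub_lt hk Nat.one_pos⟩ = p ^ r - ∑ i, n i) :
    ∃ (G : Type) (_ : Group G) (_ : Finite G), IsPGroup p G ∧
      ∃ (Ψ Θ : G → ℂ) (Φ : Fin k → (G → ℂ)),
        IsIrrChar G Ψ ∧ IsIrrChar G Θ ∧
        (∀ i, IsIrrChar G (Φ i)) ∧ Function.Injective Φ ∧
        (∀ g : G, Ψ g * Θ g = ∑ i : Fin k, (m i : ℂ) * Φ i g) ∧
        (∀ i : Fin k, cInner G (fun g => Ψ g * Θ g) (Φ i) = (m i : ℂ)) := by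
  obtain ⟨k, rfl⟩ := Nat.exists_eq_add_one.mpr hk
  have hcast (i : Fin k) : m i.castSucc = n i := hm i.castSucc i.2
  have hlast : m (Fin.last k) = p ^ r - ∑ i, n i := hmk
  have hpos : ∀ i, 0 < m i :=
    Fin.lastCases (hlast ▸ Nat.sub_pos_of_lt hlt) fun i => hcast i ▸ hn i
  have hsum : ∑ i, m i = p ^ r := by
    rw [Fin.sum_univ_castSucc, hlast]
    simp only [hcast]
    exact Nat.add_sub_of_le hlt.le
  obtain ⟨G, hGroup, hFinite, ⟨N, hcard⟩, hG⟩ :=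
    product_with_prescribed_constituents_general m hpos (hsum ▸ Nat.one_lt_pow hr.ne' hp.one_lt)
  exact ⟨G, hGroup, hFinite, .of_card (n := r * N) (by rw [hcard, hsum, pow_mul]), hG⟩
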